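/- Let p ∈ [0,1]^S, let P = P_p, and let (i,a) ∈ S. Let B be either the event Π_{i,a} or its complement, and assume Pr_P[B] > 0. Then, conditioned on B, the random variable F(X,p)_{i,a} (for X ∼ P) is independent of the tuple (F(X,p)_{j,a'}) indexed by (j,a') ∈ S with j ≤ i and (j,a') ≠ (i,a); that is, for every b ∈ ℝ and every tuple of reals w = (w_{j,a'}), Pr_{X∼P}[F(X,p)_{i,a} = b and F(X,p)_{j,a'} = w_{j,a'} for all such (j,a') | B] = Pr_{X∼P}[F(X,p)_{i,a} = b | B] · Pr_{X∼P}[F(X,p)_{j,a'} = w_{j,a'} for all such (j,a') | B]. -/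

import Mathlib

open scoped BigOperators Classical

/-- The index set `S` of parental configurations: pairs `(i, a)` where
`a : Parents i → Bool`. -/
abbrev BNIdx (d : ℕ) (Par : Fin d → Finset (Fin d)) :=
  (i : Fin d) × ({j : Fin d // j ∈ Par i} → Bool)

/-- The restriction of `x ∈ {0,1}^d` to the parents of node `i`. -/
def cfgOf {d : ℕ} (Par : Fin d → Finset (Fin d)) (x : Fin d → Bool) (i : Fin d) :
    {j : Fin d // j ∈ Par i} → Bool :=
  fun j => x j.1

/-- The Bayesian network `P_p` with conditional probability table `p`. -/
noncomputable def bnDist {d : ℕ} (Par : Fin d → Finset (Fin d))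
    (p : BNIdx d Par → ℝ) (x : Fin d → Bool) : ℝ :=
  ∏ i : Fin d, if x i then p ⟨i, cfgOf Par x i⟩ else 1 - p ⟨i, cfgOf Par x i⟩

/-- `Pr_R[Π_k]`, the probability of the parental configuration `k` under `R`. -/
noncomputable def prCfg {d : ℕ} (Par : Fin d → Finset (Fin d))
    (R : (Fin d → Bool) → ℝ) (k : BNIdx d Par) : ℝ :=
  ∑ x : Fin d → Bool, if cfgOf Par x k.1 = k.2 then R x else 0

/-- Probability of an event `A` under `R`. -/
noncomputable def prEvent {d : ℕ} (R : (Fin d → Bool) → ℝ)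
    (A : (Fin d → Bool) → Prop) : ℝ :=
  ∑ x : Fin d → Bool, if A x then R x else 0

/-- Expectation `E_{X ∼ R}[g(X)]`. -/
noncomputable def expec {d : ℕ} (R : (Fin d → Bool) → ℝ)
    (g : (Fin d → Bool) → ℝ) : ℝ :=
  ∑ x : Fin d → Bool, R x * g x

/-- The vector `F(x, q) ∈ ℝ^S`. -/
noncomputable def Fvec {d : ℕ} (Par : Fin d → Finset (Fin d))
    (x : Fin d → Bool) (q : BNIdx d Par → ℝ) (k : BNIdx d Par) : ℝ :=
  if cfgOf Par x k.1 = k.2 then (if x k.1 then 1 else 0) else q k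

/-- `R` is a probability distribution on the finite set `D`. -/
def IsProbDist {D : Type*} [Fintype D] (R : D → ℝ) : Prop :=
  (∀ x, 0 ≤ R x) ∧ ∑ x, R x = 1

/-- Total variation distance. -/
noncomputable def dTV {D : Type*} [Fintype D] (A B : D → ℝ) : ℝ :=
  (∑ x, |A x - B x|) / 2

/-- Squared Hellinger distance `d_H(A,B)² = 1 - Σ √(A(x)·B(x))`. -/
noncomputable def hellingerSq {D : Type*} [Fintype D] (A B : D → ℝ) : ℝ :=
  1 - ∑ x, Real.sqrt (A x * B x)

/-- Euclidean norm on `ℝ^ι`. -/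
noncomputable def enorm2 {ι : Type*} [Fintype ι] (v : ι → ℝ) : ℝ :=
  Real.sqrt (∑ k, v k ^ 2)

/-- The second-moment matrix `M_R` (relative to `q`). -/
noncomputable def covM {d : ℕ} (Par : Fin d → Finset (Fin d))
    (R : (Fin d → Bool) → ℝ) (q : BNIdx d Par → ℝ) :
    Matrix (BNIdx d Par) (BNIdx d Par) ℝ :=
  fun k l => expec R (fun x => (Fvec Par x q k - q k) * (Fvec Par x q l - q l))

/-- `M_R^0`: the matrix `M_R` with zeroed diagonal. -/
noncomputable def covM0 {d : ℕ} (Par : Fin d → Finset (Fin d))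
    (R : (Fin d → Bool) → ℝ) (q : BNIdx d Par → ℝ) :
    Matrix (BNIdx d Par) (BNIdx d Par) ℝ :=
  fun k l => if k = l then 0 else covM Par R q k l

/-- Spectral norm (ℓ²-operator norm) of a real matrix. -/
noncomputable def specNorm {ι : Type*} [Fintype ι] [DecidableEq ι]
    (M : Matrix ι ι ℝ) : ℝ :=
  ‖Matrix.toEuclideanCLM (𝕜 := ℝ) M‖


def flipAt {d : ℕ} (i : Fin d) (x : Fin d → Bool) : Fin d → Bool :=
  Function.update x i (!x i)

lemma flipAt_invol {d : ℕ} (i : Fin d) : Function.Involutive (flipAt i) := by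
  intro x
  simp [flipAt]

lemma sum_flipAt {d : ℕ} (i : Fin d) (h : (Fin d → Bool) → ℝ) :
    ∑ x, h (flipAt i x) = ∑ x, h x :=
  Equiv.sum_comp (flipAt_invol i).toPerm h

lemma flipAt_of_ne {d : ℕ} (i j : Fin d) (x : Fin d → Bool) (h : j ≠ i) :
    flipAt i x j = x j := by
  simp [flipAt, h]

lemma flipAt_self {d : ℕ} (i : Fin d) (x : Fin d → Bool) :
    flipAt i x i = !x i := by
  simp [flipAt]

lemma two_sum_flip {d : ℕ} (i : Fin d) (h f : (Fin d → Bool) → ℝ) (c : ℝ)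
    (hh : ∀ x, h (flipAt i x) = h x) (hf : ∀ x, h x ≠ 0 → f x + f (flipAt i x) = c) :
    2 * ∑ x, h x * f x = c * ∑ x, h x := by
  have h1 := sum_flipAt i (fun x => h x * f x)
  rw [two_mul]
  nth_rewrite 1 [← h1]
  rw [← Finset.sum_add_distrib, Finset.mul_sum]
  refine Finset.sum_congr rfl fun x _ => ?_
  simp only [hh]
  by_cases h0 : h x = 0
  · simp [h0]
  · rw [← hf x h0]; ring

noncomputable def fac {d : ℕ} (Par : Fin d → Finset (Fin d))
    (p : BNIdx d Par → ℝ) (i : Fin d) (x : Fin d → Bool) : ℝ :=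
  if x i then p ⟨i, cfgOf Par x i⟩ else 1 - p ⟨i, cfgOf Par x i⟩

lemma cfgOf_congr {d : ℕ} (Par : Fin d → Finset (Fin d))
    (hpar : ∀ i : Fin d, ∀ j ∈ Par i, j < i) (i : Fin d) (x y : Fin d → Bool)
    (h : ∀ j, j < i → x j = y j) : cfgOf Par x i = cfgOf Par y i := by
  funext j
  exact h _ (hpar _ _ j.2)

lemma fac_congr {d : ℕ} (Par : Fin d → Finset (Fin d))
    (hpar : ∀ i : Fin d, ∀ j ∈ Par i, j < i) (p : BNIdx d Par → ℝ)
    (i : Fin d) (x y : Fin d → Bool)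
    (h : ∀ j, j ≤ i → x j = y j) : fac Par p i x = fac Par p i y := by
  unfold fac
  rw [cfgOf_congr Par hpar i x y (fun j hj => h j hj.le), h i le_rfl]

lemma cfgOf_flip {d : ℕ} (Par : Fin d → Finset (Fin d))
    (hpar : ∀ i : Fin d, ∀ j ∈ Par i, j < i) (i : Fin d) (x : Fin d → Bool) :
    cfgOf Par (flipAt i x) i = cfgOf Par x i :=
  cfgOf_congr Par hpar i _ _ fun j hj => flipAt_of_ne i j x hj.ne

lemma fac_flip {d : ℕ} (Par : Fin d → Finset (Fin d))
    (hpar : ∀ i : Fin d, ∀ j ∈ Par i, j < i) (p : BNIdx d Par → ℝ)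
    (i : Fin d) (x : Fin d → Bool) :
    fac Par p i x + fac Par p i (flipAt i x) = 1 := by
  unfold fac
  rw [cfgOf_flip Par hpar, flipAt_self]
  cases x i <;> simp

noncomputable def pre {d : ℕ} (Par : Fin d → Finset (Fin d))
    (p : BNIdx d Par → ℝ) (n : ℕ) (x : Fin d → Bool) : ℝ :=
  ∏ i ∈ Finset.univ.filter (fun i : Fin d => i.val < n), fac Par p i x

lemma pre_congr {d : ℕ} (Par : Fin d → Finset (Fin d))
    (hpar : ∀ i : Fin d, ∀ j ∈ Par i, j < i) (p : BNIdx d Par → ℝ)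
    (n : ℕ) (x y : Fin d → Bool)
    (h : ∀ j : Fin d, j.val < n → x j = y j) : pre Par p n x = pre Par p n y := by
  unfold pre
  refine Finset.prod_congr rfl fun i hi => fac_congr Par hpar p i x y fun j hj => h j ?_
  have := (Finset.mem_filter.1 hi).2
  have : j.val ≤ i.val := hj
  omega

lemma pre_succ {d : ℕ} (Par : Fin d → Finset (Fin d)) (p : BNIdx d Par → ℝ)
    (i : Fin d) (x : Fin d → Bool) :
    pre Par p (i.val + 1) x = pre Par p i.val x * fac Par p i x := by
  unfold pre
  have : Finset.univ.filter (fun j : Fin d => j.val < i.val + 1)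
      = insert i (Finset.univ.filter (fun j : Fin d => j.val < i.val)) := by
    ext j
    simp only [Finset.mem_filter, Finset.mem_univ, true_and, Finset.mem_insert, Fin.ext_iff]
    omega
  rw [this, Finset.prod_insert (by simp), mul_comm]

lemma marg {d : ℕ} (Par : Fin d → Finset (Fin d))
    (hpar : ∀ i : Fin d, ∀ j ∈ Par i, j < i) (p : BNIdx d Par → ℝ) (m : ℕ) :
    ∀ (n : ℕ) (_ : n + m = d) (g : (Fin d → Bool) → ℝ)
    (_ : ∀ x y : Fin d → Bool, (∀ j : Fin d, j.val < n → x j = y j) → g x = g y),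
    2 ^ m * ∑ x, g x * bnDist Par p x = ∑ x, g x * pre Par p n x := by
  induction m with
  | zero =>
    intro n hn g hg
    simp only [pow_zero, one_mul]
    refine Finset.sum_congr rfl fun x _ => ?_
    have : Finset.univ.filter (fun j : Fin d => j.val < n) = Finset.univ := by
      ext j
      have := j.2
      simp only [Finset.mem_filter, Finset.mem_univ, true_and, iff_true]
      omega
    unfold pre
    rw [this]
    rfl
  | succ m ih =>
    intro n hn g hg
    have e := ih (n + 1) (by omega) g (fun x y h => hg x y fun j hj => h j (by omega))
    have hnd : n < d := by omega
    have e2 := two_sum_flip (⟨n, hnd⟩ : Fin d) (fun x => g x * pre Par p n x)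
      (fac Par p ⟨n, hnd⟩) 1 (by
        intro x
        have hx : ∀ j : Fin d, j.val < n → flipAt ⟨n, hnd⟩ x j = x j := fun j hj =>
          flipAt_of_ne _ _ _ (by rintro rfl; simp at hj)
        rw [hg _ _ hx, pre_congr Par hpar p n _ _ hx])
      (fun x _ => fac_flip Par hpar p _ x)
    rw [one_mul] at e2
    rw [← e2, pow_succ', mul_assoc, e]
    congr 1
    refine Finset.sum_congr rfl fun x _ => ?_
    rw [pre_succ Par p ⟨n, hnd⟩ x, mul_assoc]

lemma key {d : ℕ} (Par : Fin d → Finset (Fin d))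
    (hpar : ∀ i : Fin d, ∀ j ∈ Par i, j < i) (p : BNIdx d Par → ℝ)
    (k₀ : BNIdx d Par) (φ : Bool → ℝ) (g : (Fin d → Bool) → ℝ)
    (hg : ∀ x y : Fin d → Bool, (∀ j : Fin d, j < k₀.1 → x j = y j) → g x = g y)
    (hs : ∀ x, g x ≠ 0 → cfgOf Par x k₀.1 = k₀.2) :
    ∑ x, g x * φ (x k₀.1) * bnDist Par p x
      = (φ true * p k₀ + φ false * (1 - p k₀)) * ∑ x, g x * bnDist Par p x := by
  obtain ⟨i, a⟩ := k₀
  simp only at hg hs ⊢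
  obtain ⟨m, hm⟩ : ∃ m, i.val + 1 + m = d := ⟨d - (i.val + 1), by have := i.2; omega⟩
  have e1 := marg Par hpar p m (i.val + 1) hm (fun x => g x * φ (x i)) (by
    intro x y h
    rw [hg x y (fun j hj => h j (by have : j.val < i.val := hj; omega)), h i (by omega)])
  have e2 := marg Par hpar p (m + 1) i.val (by omega) g (fun x y h => hg x y fun j hj => h j hj)
  have e3 := two_sum_flip i (fun x => g x * pre Par p i.val x)
    (fun x => φ (x i) * fac Par p i x) (φ true * p ⟨i, a⟩ + φ false * (1 - p ⟨i, a⟩)) (by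
      intro x
      have hx : ∀ j : Fin d, j.val < i.val → flipAt i x j = x j := fun j hj =>
        flipAt_of_ne _ _ _ (by rintro rfl; simp at hj)
      rw [hg _ _ hx, pre_congr Par hpar p _ _ _ hx]) (by
      intro x hx
      have hc := hs x (left_ne_zero_of_mul hx)
      simp only [fac, cfgOf_flip Par hpar, flipAt_self, hc]
      cases x i <;> simp <;> ring)
  rw [← e2] at e3
  have e4 : ∑ x, g x * pre Par p i.val x * (φ (x i) * fac Par p i x)
      = ∑ x, g x * φ (x i) * pre Par p (i.val + 1) x := by
    refine Finset.sum_congr rfl fun x _ => ?_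
    rw [pre_succ]; ring
  rw [e4, ← e1] at e3
  have h2 : (2 : ℝ) ^ (m + 1) ≠ 0 := by positivity
  apply mul_left_cancel₀ h2
  rw [pow_succ'] at e3 ⊢
  linarith

lemma key_event {d : ℕ} (Par : Fin d → Finset (Fin d))
    (hpar : ∀ i : Fin d, ∀ j ∈ Par i, j < i) (p : BNIdx d Par → ℝ)
    (k₀ : BNIdx d Par) (b : ℝ) (A : (Fin d → Bool) → Prop)
    (hA : ∀ x y : Fin d → Bool, (∀ j : Fin d, j < k₀.1 → x j = y j) → A x → A y)
    (hs : ∀ x, A x → cfgOf Par x k₀.1 = k₀.2) :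
    prEvent (bnDist Par p) (fun x => A x ∧ Fvec Par x p k₀ = b)
      = ((if (1 : ℝ) = b then 1 else 0) * p k₀ + (if (0 : ℝ) = b then 1 else 0) * (1 - p k₀))
        * prEvent (bnDist Par p) A := by
  have e := key Par hpar p k₀ (fun t => if (if t then (1 : ℝ) else 0) = b then 1 else 0)
    (fun x => if A x then 1 else 0) (by
      intro x y h
      have : A x ↔ A y := ⟨hA x y h, hA y x fun j hj => (h j hj).symm⟩
      simp only [this]) (by
      intro x hx
      apply hs
      by_contra hc
      simp [hc] at hx)
  simp only [if_true, Bool.false_eq_true, if_false] at e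
  unfold prEvent
  convert e using 1
  · refine Finset.sum_congr rfl fun x _ => ?_
    by_cases hx : A x
    · simp [hx, Fvec, hs x hx]
    · simp [hx]
  · congr 1
    refine Finset.sum_congr rfl fun x _ => ?_
    simp

theorem Fvec_conditionally_independent
    (d : ℕ) (hd : 1 ≤ d) (Par : Fin d → Finset (Fin d))
    (hpar : ∀ i : Fin d, ∀ j ∈ Par i, j < i)
    (p : BNIdx d Par → ℝ) (hp : ∀ k, p k ∈ Set.Icc (0:ℝ) 1)
    (k₀ : BNIdx d Par) (B : (Fin d → Bool) → Prop)
    (hB : (∀ x, B x ↔ cfgOf Par x k₀.1 = k₀.2) ∨ (∀ x, B x ↔ cfgOf Par x k₀.1 ≠ k₀.2))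
    (hpos : 0 < prEvent (bnDist Par p) B)
    (b : ℝ) (w : BNIdx d Par → ℝ) :
    prEvent (bnDist Par p)
        (fun x => B x ∧ Fvec Par x p k₀ = b ∧
          ∀ k : BNIdx d Par, k.1 ≤ k₀.1 → k ≠ k₀ → Fvec Par x p k = w k) /
      prEvent (bnDist Par p) B
    = (prEvent (bnDist Par p) (fun x => B x ∧ Fvec Par x p k₀ = b) /
        prEvent (bnDist Par p) B) *
      (prEvent (bnDist Par p)
          (fun x => B x ∧
            ∀ k : BNIdx d Par, k.1 ≤ k₀.1 → k ≠ k₀ → Fvec Par x p k = w k) /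
        prEvent (bnDist Par p) B) := by
  have hB0 := hpos.ne'
  rcases hB with hB | hB
  · have hBe : B = fun x => cfgOf Par x k₀.1 = k₀.2 := funext fun x => propext (hB x)
    have hBd : ∀ x y : Fin d → Bool, (∀ j : Fin d, j < k₀.1 → x j = y j) → B x → B y := by
      intro x y h hx
      rw [hB] at hx ⊢
      rw [← hx]
      exact (cfgOf_congr Par hpar _ _ _ h).symm
    have e1 := key_event Par hpar p k₀ b B hBd (fun x hx => (hB x).1 hx)
    have e2 := key_event Par hpar p k₀ b (fun x => B x ∧
            ∀ k : BNIdx d Par, k.1 ≤ k₀.1 → k ≠ k₀ → Fvec Par x p k = w k) (by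
      rintro x y h ⟨hx, hw⟩
      refine ⟨hBd x y h hx, fun k hk hne => ?_⟩
      rw [← hw k hk hne]
      rcases hk.lt_or_eq with hlt | heq
      · unfold Fvec
        rw [cfgOf_congr Par hpar k.1 x y fun j hj => h j (hj.trans hlt), h _ hlt]
      · have hy := (hB y).1 (hBd x y h hx)
        have hx := (hB x).1 hx
        obtain ⟨i, a⟩ := k₀
        obtain ⟨i', a'⟩ := k
        simp only at heq hx hy
        subst heq
        have hne' : a ≠ a' := by
          rintro rfl
          exact hne rfl
        simp [Fvec, hx, hy, hne']) (fun x hx => (hB x).1 hx.1)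
    have e3 : (fun x => B x ∧ Fvec Par x p k₀ = b ∧
          ∀ k : BNIdx d Par, k.1 ≤ k₀.1 → k ≠ k₀ → Fvec Par x p k = w k)
        = (fun x => (B x ∧
            ∀ k : BNIdx d Par, k.1 ≤ k₀.1 → k ≠ k₀ → Fvec Par x p k = w k)
            ∧ Fvec Par x p k₀ = b) := by
      funext x
      apply propext
      tauto
    rw [e3, e1, e2]
    field_simp
  · have hF : ∀ x, B x → Fvec Par x p k₀ = p k₀ := by
      intro x hx
      simp [Fvec, (hB x).1 hx]
    by_cases hb : p k₀ = b
    · have e3 : (fun x => B x ∧ Fvec Par x p k₀ = b ∧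
          ∀ k : BNIdx d Par, k.1 ≤ k₀.1 → k ≠ k₀ → Fvec Par x p k = w k)
        = (fun x => B x ∧
            ∀ k : BNIdx d Par, k.1 ≤ k₀.1 → k ≠ k₀ → Fvec Par x p k = w k) := by
        funext x
        apply propext
        exact ⟨fun h => ⟨h.1, h.2.2⟩, fun h => ⟨h.1, (hF x h.1).trans hb, h.2⟩⟩
      have e4 : (fun x => B x ∧ Fvec Par x p k₀ = b) = B := by
        funext x
        apply propext
        exact ⟨fun h => h.1, fun h => ⟨h, (hF x h).trans hb⟩⟩
      rw [e3, e4, div_self hB0, one_mul]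
    · have e3 : (fun x => B x ∧ Fvec Par x p k₀ = b ∧
          ∀ k : BNIdx d Par, k.1 ≤ k₀.1 → k ≠ k₀ → Fvec Par x p k = w k)
        = (fun _ => False) := by
        funext x
        apply propext
        exact ⟨fun h => hb ((hF x h.1).symm.trans h.2.1), False.elim⟩
      have e4 : (fun x => B x ∧ Fvec Par x p k₀ = b) = fun _ => False := by
        funext x
        apply propext
        exact ⟨fun h => hb ((hF x h.1).symm.trans h.2), False.elim⟩
      rw [e3, e4]
      simp [prEvent]
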